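/- arXiv:2207.09053 — 2 statements merged into one kernel-verified Lean document; each statement's English description precedes it below -/
import Mathlib

section
/- Let n ≥ 11 be an integer and write the prime factorization of n! as p_1^{α_1}·p_2^{α_2}···p_k^{α_k} with primes 2 = p_1 < p_2 < ⋯ < p_k and all α_i ≥ 1. Then α_{k−1} = α_k = 1, p_k ≤ 2^{α_1}, and there exists a prime q with q ≡ 2 (mod 3) such that q divides n! exactly to the first power (q ∣ n! and q² ∤ n!). -/
/-!
It suffices to find two primes in `(N / 2, N]`, one of them congruent to `2` modulo `3`, where `N`
is the `n` of the theorem: every prime in that interval divides `N!` exactly once, and it exceeds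
all prime factors outside the interval. A pair of primes `q`, `r` serves every `N` with
`max q r ≤ N < 2 * min q r`, and twenty-one such ranges cover `11 ≤ N < 2 ^ 22`.

For large `N`, let `χ` be the nontrivial character modulo `3` and expand
`log (N! / ⌊N / 2⌋! ^ 2) - ∑ m ≤ N, χ m * log m` as a combination of the `Λ d`. The coefficient of
`Λ d` is `(⌊N / d⌋ mod 2) - χ d * [⌊N / d⌋ ≡ 1 mod 3]`. On primes in `(N / 2, N]` it is `2` or `0`
according to the residue modulo `3`. On the smaller primes it is at most
`[d ≤ N / 3] + [d ≤ N / 7]`, whose contribution is at most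
`θ (N / 3) + θ (N / 7) ≤ (1 / 3 + 1 / 7) * N * log 4 = 20 / 21 * N * log 2`, and higher prime powers
contribute at most `O(√N * log N)`. The whole expression is at least `N * log 2 - O(log N)`, so
primes congruent to `2` modulo `3` in `(N / 2, N]` must account for the difference.
-/

theorem exists_mem_le_lt_of_isChain {ι α : Type*} [LinearOrder α] {lo hi : ι → α} {x : α} {i : ι}
    {l : List ι} (hchain : (i :: l).IsChain fun a b ↦ lo b ≤ hi a) (hlo : lo i ≤ x)
    (hhi : x < hi ((i :: l).getLast (List.cons_ne_nil i l))) :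
    ∃ a ∈ i :: l, lo a ≤ x ∧ x < hi a := by
  induction l generalizing i with
  | nil => exact ⟨i, by simp, hlo, hhi⟩
  | cons j l ih =>
    rcases lt_or_ge x (hi i) with hx | hx
    · exact ⟨i, by simp, hlo, hx⟩
    · rw [List.isChain_cons_cons] at hchain
      obtain ⟨a, ha, hax⟩ := ih hchain.2 (hchain.1.trans hx) (by simpa using hhi)
      exact ⟨a, List.mem_cons_of_mem i ha, hax⟩

theorem lt_apply_of_monotone_of_le_add_card {k : ℕ} {α : Type*} [LinearOrder α] {p : Fin k → α}
    (hp : Monotone p) {x : α} {l : Fin k} (hl : k ≤ l + Finset.card {i | x < p i}) : x < p l := by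
  by_contra! hx
  have hsub : ({i | x < p i} : Finset (Fin k)) ⊆ Finset.Ioi l := fun i hi ↦ by
    simp only [Finset.mem_filter_univ, Finset.mem_Ioi] at hi ⊢
    exact hp.reflect_lt (hx.trans_lt hi)
  have hcard := Finset.card_le_card hsub
  rw [Fin.card_Ioi] at hcard
  have := l.isLt
  omega

theorem div_le_factorization_factorial {p : ℕ} (hp : p.Prime) (n : ℕ) :
    n / p ≤ n.factorial.factorization p :=
  calc n / p ≤ (p * (n / p)).factorial.factorization p := by
        rw [Nat.factorization_factorial_mul hp]; exact Nat.le_add_left _ _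
    _ ≤ n.factorial.factorization p :=
        (Nat.factorization_le_iff_dvd (Nat.factorial_ne_zero _) (Nat.factorial_ne_zero n)).2
          (Nat.factorial_dvd_factorial (Nat.mul_div_le n p)) p

theorem factorization_factorial_eq_div {p n : ℕ} (hp : p.Prime) (hn : n < p ^ 2) :
    n.factorial.factorization p = n / p := by
  rw [Nat.factorization_factorial hp (Nat.log_lt_of_lt_pow' two_ne_zero hn)]
  simp

theorem two_mul_add_one_le_two_pow {m : ℕ} (hm : 3 ≤ m) : 2 * m + 1 ≤ 2 ^ m := by
  induction m, hm using Nat.le_induction with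
  | base => norm_num
  | succ m _ ih => rw [pow_succ]; omega

theorem le_two_pow_factorization_factorial {n : ℕ} (hn : 6 ≤ n) :
    n ≤ 2 ^ n.factorial.factorization 2 :=
  calc n ≤ 2 * (n / 2) + 1 := by omega
    _ ≤ 2 ^ (n / 2) := two_mul_add_one_le_two_pow (by omega)
    _ ≤ 2 ^ n.factorial.factorization 2 :=
        Nat.pow_le_pow_right two_pos (div_le_factorization_factorial Nat.prime_two n)

theorem mem_primeFactors_factorial {n p : ℕ} :
    p ∈ n.factorial.primeFactors ↔ p.Prime ∧ p ≤ n := by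
  rw [Nat.mem_primeFactors_of_ne_zero n.factorial_ne_zero, and_congr_right_iff]
  exact fun hp ↦ hp.dvd_factorial

/-- The primes in the interval `(n / 2, n]`. -/
def upperHalfPrimes (n : ℕ) : Finset ℕ := {p ∈ n.primesLE | n < 2 * p}

theorem mem_upperHalfPrimes {n p : ℕ} : p ∈ upperHalfPrimes n ↔ p.Prime ∧ p ≤ n ∧ n < 2 * p := by
  rw [upperHalfPrimes, Finset.mem_filter, Nat.mem_primesLE]
  tauto

theorem factorization_factorial_eq_one {n p : ℕ} (hp : p ∈ upperHalfPrimes n) :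
    n.factorial.factorization p = 1 := by
  obtain ⟨hp, hpn, hnp⟩ := mem_upperHalfPrimes.1 hp
  rw [factorization_factorial_eq_div hp (by nlinarith [hp.two_le])]
  exact Nat.div_eq_of_lt_le (by omega) (by omega)

section PrimesInUpperHalf

open Finset Real
open scoped Chebyshev ArithmeticFunction.vonMangoldt

theorem sum_Ioc_mul_le_of_monotone {R : Type*} [Semiring R] [PartialOrder R] [IsOrderedRing R]
    {a g : ℕ → R} (ha : ∀ n, 0 ≤ ∑ m ∈ Ioc 0 n, a m) (hg : Monotone g) (n : ℕ) :
    ∑ m ∈ Ioc 0 n, a m * g m ≤ (∑ m ∈ Ioc 0 n, a m) * g n := by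
  induction n with
  | zero => simp
  | succ n ih =>
    rw [sum_Ioc_succ_top n.zero_le, sum_Ioc_succ_top n.zero_le, add_mul]
    gcongr
    exact ih.trans (mul_le_mul_of_nonneg_left (hg n.le_succ) (ha n))

theorem sum_mul_log_eq_sum_vonMangoldt_mul (f : ℕ →* ℝ) (N : ℕ) :
    ∑ m ∈ Ioc 0 N, f m * log m = ∑ d ∈ Ioc 0 N, Λ d * (f d * ∑ m ∈ Ioc 0 (N / d), f m) := by
  set F : ArithmeticFunction ℝ := toArithmeticFunction f
  have hF {m : ℕ} (hm : 0 < m) : F m = f m := if_neg hm.ne'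
  have hconv {m : ℕ} (hm : 0 < m) : (ArithmeticFunction.pmul Λ F * F) m = f m * log m := by
    rw [ArithmeticFunction.mul_apply, ← ArithmeticFunction.vonMangoldt_sum, mul_sum,
      Nat.sum_divisorsAntidiagonal fun d e ↦ ArithmeticFunction.pmul Λ F d * F e]
    refine sum_congr rfl fun d hd ↦ ?_
    have hdm := Nat.dvd_of_mem_divisors hd
    rw [ArithmeticFunction.pmul_apply, hF (Nat.pos_of_mem_divisors hd),
      hF (Nat.div_pos (Nat.le_of_dvd hm hdm) (Nat.pos_of_mem_divisors hd)), mul_assoc, ← map_mul,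
      Nat.mul_div_cancel' hdm, mul_comm]
  calc ∑ m ∈ Ioc 0 N, f m * log m
      = ∑ m ∈ Ioc 0 N, (ArithmeticFunction.pmul Λ F * F) m :=
        sum_congr rfl fun m hm ↦ (hconv (mem_Ioc.1 hm).1).symm
    _ = ∑ d ∈ Ioc 0 N, ArithmeticFunction.pmul Λ F d * ∑ m ∈ Ioc 0 (N / d), F m :=
        ArithmeticFunction.sum_Ioc_mul_eq_sum_sum _ _ N
    _ = ∑ d ∈ Ioc 0 N, Λ d * (f d * ∑ m ∈ Ioc 0 (N / d), f m) :=
        sum_congr rfl fun d hd ↦ by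
          rw [ArithmeticFunction.pmul_apply, hF (mem_Ioc.1 hd).1, mul_assoc,
            sum_congr rfl fun m hm ↦ hF (mem_Ioc.1 hm).1]

theorem log_factorial_eq_sum_Ioc (N : ℕ) : log N.factorial = ∑ m ∈ Ioc 0 N, log m := by
  rw [← prod_Ico_id_eq_factorial, Nat.cast_prod, ← Ico_add_one_add_one_eq_Ioc, zero_add]
  exact log_prod fun m hm ↦ Nat.cast_ne_zero.2 (Nat.one_le_iff_ne_zero.1 (mem_Ico.1 hm).1)

theorem log_factorial_eq_sum_vonMangoldt_mul (N : ℕ) :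
    log N.factorial = ∑ d ∈ Ioc 0 N, Λ d * (N / d : ℕ) := by
  simpa [log_factorial_eq_sum_Ioc] using sum_mul_log_eq_sum_vonMangoldt_mul 1 N

theorem log_factorial_sub_mul_log_factorial_div (N c : ℕ) :
    log N.factorial - c * log (N / c).factorial = ∑ d ∈ Ioc 0 N, Λ d * (N / d % c : ℕ) := by
  have hdiv : log (N / c).factorial = ∑ d ∈ Ioc 0 N, Λ d * (N / d / c : ℕ) := by
    rw [log_factorial_eq_sum_vonMangoldt_mul]
    simp only [Nat.div_right_comm N _ c]
    refine sum_subset (Ioc_subset_Ioc_right (Nat.div_le_self N c)) fun d hd hd' ↦ ?_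
    rw [Nat.div_eq_of_lt (by grind)]
    simp
  rw [hdiv, log_factorial_eq_sum_vonMangoldt_mul, mul_sum, ← sum_sub_distrib]
  refine sum_congr rfl fun d _ ↦ ?_
  have hmod : ((N / d : ℕ) : ℝ) = c * (N / d / c : ℕ) + (N / d % c : ℕ) := by
    exact_mod_cast (Nat.div_add_mod (N / d) c).symm
  rw [hmod]
  ring

theorem two_pow_mul_factorial_sq_le (N : ℕ) :
    2 ^ N * (N / 2).factorial ^ 2 ≤ (N + 1) * N.factorial := by
  have hchoose : 2 ^ N ≤ (N + 1) * N.choose (N / 2) :=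
    calc 2 ^ N = ∑ k ∈ range (N + 1), N.choose k := (Nat.sum_range_choose N).symm
      _ ≤ ∑ _k ∈ range (N + 1), N.choose (N / 2) :=
          sum_le_sum fun k _ ↦ Nat.choose_le_middle k N
      _ = (N + 1) * N.choose (N / 2) := by simp
  calc 2 ^ N * (N / 2).factorial ^ 2
      ≤ (N + 1) * N.choose (N / 2) * ((N / 2).factorial * (N - N / 2).factorial) := by
        rw [sq]
        gcongr
        omega
    _ = (N + 1) * N.factorial := by
        rw [← Nat.choose_mul_factorial_mul_factorial (Nat.div_le_self N 2)]
        ring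

theorem mul_log_two_sub_log_le (N : ℕ) :
    N * log 2 - log (N + 1) ≤ log N.factorial - 2 * log (N / 2).factorial := by
  have h : (2 : ℝ) ^ N * (N / 2).factorial ^ 2 ≤ (N + 1) * N.factorial := by
    exact_mod_cast two_pow_mul_factorial_sq_le N
  have hlog := log_le_log (by positivity) h
  rw [log_mul (by positivity) (by positivity), log_mul (by positivity) (by positivity), log_pow,
    log_pow] at hlog
  push_cast at hlog
  linarith

/-- The nontrivial character modulo `3`, as a completely multiplicative real function on `ℕ`. -/
noncomputable def chiThree : ℕ →* ℝ :=
  (Int.castRingHom ℝ : ℤ →* ℝ).comp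
    ((quadraticChar (ZMod 3)).toMonoidHom.comp (Nat.castRingHom (ZMod 3) : ℕ →* ZMod 3))

theorem chiThree_apply (m : ℕ) :
    chiThree m = if m % 3 = 1 then 1 else if m % 3 = 2 then -1 else 0 := by
  have hval : ∀ x : ZMod 3,
      quadraticChar (ZMod 3) x = if x = 1 then 1 else if x = 2 then -1 else 0 := by decide
  have hone : (m : ZMod 3) = 1 ↔ m % 3 = 1 := by
    exact_mod_cast ZMod.natCast_eq_natCast_iff' m 1 3
  have htwo : (m : ZMod 3) = 2 ↔ m % 3 = 2 := by
    exact_mod_cast ZMod.natCast_eq_natCast_iff' m 2 3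
  change ((quadraticChar (ZMod 3) (m : ZMod 3) : ℤ) : ℝ) = _
  simp [hval, hone, htwo]

theorem sum_chiThree (N : ℕ) : ∑ m ∈ Ioc 0 N, chiThree m = if N % 3 = 1 then 1 else 0 := by
  induction N with
  | zero => simp
  | succ N ih =>
    rw [sum_Ioc_succ_top N.zero_le, ih, chiThree_apply]
    grind

theorem monotone_log_natCast : Monotone fun n : ℕ ↦ log n := by
  intro a b hab
  rcases a.eq_zero_or_pos with rfl | ha
  · simpa using log_natCast_nonneg b
  · exact log_le_log (by positivity) (by exact_mod_cast hab)

theorem sum_chiThree_mul_log_le (N : ℕ) : ∑ m ∈ Ioc 0 N, chiThree m * log m ≤ log N :=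
  calc ∑ m ∈ Ioc 0 N, chiThree m * log m
      ≤ (∑ m ∈ Ioc 0 N, chiThree m) * log N :=
        sum_Ioc_mul_le_of_monotone (fun n ↦ by rw [sum_chiThree]; split_ifs <;> simp)
          monotone_log_natCast N
    _ ≤ 1 * log N := by
        gcongr
        rw [sum_chiThree]
        split_ifs <;> simp
    _ = log N := one_mul _

/-- The coefficient of `Λ d` in `log (N! / ⌊N / 2⌋! ^ 2) - ∑ j ≤ N, chiThree j * log j`, expressed
in terms of `d` and the quotient `m = ⌊N / d⌋`. -/
noncomputable def vonMangoldtWeight (d m : ℕ) : ℝ :=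
  (m % 2 : ℕ) - chiThree d * if m % 3 = 1 then 1 else 0

theorem sum_vonMangoldt_mul_vonMangoldtWeight (N : ℕ) :
    ∑ d ∈ Ioc 0 N, Λ d * vonMangoldtWeight d (N / d) =
      log N.factorial - 2 * log (N / 2).factorial - ∑ m ∈ Ioc 0 N, chiThree m * log m := by
  have hcentral := log_factorial_sub_mul_log_factorial_div N 2
  rw [Nat.cast_two] at hcentral
  simp only [hcentral, sum_mul_log_eq_sum_vonMangoldt_mul, sum_chiThree, vonMangoldtWeight, mul_sub,
    sum_sub_distrib]

theorem vonMangoldtWeight_le_two (d m : ℕ) : vonMangoldtWeight d m ≤ 2 := by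
  have hmod : ((m % 2 : ℕ) : ℝ) ≤ 1 := by exact_mod_cast Nat.le_of_lt_succ (m.mod_lt two_pos)
  rw [vonMangoldtWeight, chiThree_apply]
  split_ifs <;> linarith

theorem vonMangoldtWeight_le {d m : ℕ} (hm : m = 1 → d % 3 ≠ 0) :
    vonMangoldtWeight d m ≤ (if 3 ≤ m then 1 else 0) + (if 7 ≤ m then 1 else 0) +
      2 * if m = 1 ∧ d % 3 = 2 then 1 else 0 := by
  rcases le_or_gt 7 m with h7 | h7
  · have := vonMangoldtWeight_le_two d m
    rw [if_pos (by omega), if_pos h7, if_neg (by omega)]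
    linarith
  · rw [vonMangoldtWeight, chiThree_apply]
    interval_cases m <;> norm_num at hm ⊢ <;> grind

theorem theta_div_eq_sum (N : ℕ) {c : ℕ} (hc : 0 < c) :
    θ (N / c) = ∑ p ∈ N.primesLE, log p * if c ≤ N / p then 1 else 0 := by
  simp only [mul_ite, mul_one, mul_zero]
  rw [← sum_filter, Chebyshev.theta_eq_sum_primesLE, Nat.floor_div_natCast, Nat.floor_natCast]
  congr 1
  ext p
  simp only [mem_filter, Nat.mem_primesLE]
  constructor
  · rintro ⟨hpc, hp⟩
    have := (Nat.le_div_iff_mul_le hc).1 hpc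
    exact ⟨⟨by nlinarith, hp⟩, (Nat.le_div_iff_mul_le hp.pos).2 (by linarith)⟩
  · rintro ⟨⟨-, hp⟩, hc'⟩
    have := (Nat.le_div_iff_mul_le hp.pos).1 hc'
    exact ⟨(Nat.le_div_iff_mul_le hc).2 (by linarith), hp⟩

theorem sum_vonMangoldt_mul_le {w : ℕ → ℝ} {C : ℝ} (hw : ∀ d, ¬ d.Prime → w d ≤ C) (N : ℕ) :
    ∑ d ∈ Ioc 0 N, Λ d * w d ≤ ∑ p ∈ N.primesLE, log p * w p + C * (ψ N - θ N) := by
  have hprimes : {d ∈ Ioc 0 N | d.Prime} = N.primesLE := by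
    ext p
    simp only [mem_filter, mem_Ioc, Nat.mem_primesLE]
    exact ⟨fun h ↦ ⟨h.1.2, h.2⟩, fun h ↦ ⟨⟨h.2.pos, h.1⟩, h.2⟩⟩
  rw [← sum_filter_add_sum_filter_not _ Nat.Prime, hprimes,
    Chebyshev.psi_sub_theta_eq_sum_not_prime, Nat.floor_natCast, mul_sum]
  refine add_le_add (sum_le_sum fun p hp ↦ ?_) (sum_le_sum fun d hd ↦ ?_)
  · rw [ArithmeticFunction.vonMangoldt_apply_prime (Nat.prime_of_mem_primesLE hp)]
  · rw [mul_comm C]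
    exact mul_le_mul_of_nonneg_left (hw d (mem_filter.1 hd).2) ArithmeticFunction.vonMangoldt_nonneg

theorem sum_log_upperHalfPrimes (N : ℕ) :
    ∑ p ∈ upperHalfPrimes N with p % 3 = 2, log p =
      ∑ p ∈ N.primesLE, log p * if N / p = 1 ∧ p % 3 = 2 then 1 else 0 := by
  simp only [mul_ite, mul_one, mul_zero]
  rw [← sum_filter, upperHalfPrimes, filter_filter]
  refine sum_congr (filter_congr fun p hp ↦ ?_) fun _ _ ↦ rfl
  rw [Nat.mem_primesLE] at hp
  rw [Nat.div_eq_iff hp.2.pos]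
  have := hp.2.pos
  grind

theorem sum_primesLE_log_mul_vonMangoldtWeight_le {N : ℕ} (hN : 6 ≤ N) :
    ∑ p ∈ N.primesLE, log p * vonMangoldtWeight p (N / p) ≤
      θ (N / 3) + θ (N / 7) + 2 * ∑ p ∈ upperHalfPrimes N with p % 3 = 2, log p := by
  have h3 := theta_div_eq_sum N three_pos
  have h7 := theta_div_eq_sum N (c := 7) (by norm_num)
  push_cast at h3 h7
  rw [sum_log_upperHalfPrimes, h3, h7, mul_sum, ← sum_add_distrib, ← sum_add_distrib]
  refine sum_le_sum fun p hp ↦ ?_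
  rw [mul_left_comm 2, ← mul_add, ← mul_add]
  refine mul_le_mul_of_nonneg_left (vonMangoldtWeight_le fun hdiv hp3 ↦ ?_) (log_natCast_nonneg p)
  obtain rfl : 3 = p := (Nat.prime_dvd_prime_iff_eq Nat.prime_three
    (Nat.prime_of_mem_primesLE hp)).1 (Nat.dvd_of_mod_eq_zero hp3)
  omega

theorem mul_log_two_sub_le_theta_add_sum_log {N : ℕ} (hN : 6 ≤ N) :
    N * log 2 - log (N + 1) - log N ≤
      θ (N / 3) + θ (N / 7) + 2 * ∑ p ∈ upperHalfPrimes N with p % 3 = 2, log p +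
        2 * (ψ N - θ N) :=
  calc N * log 2 - log (N + 1) - log N
      ≤ ∑ d ∈ Ioc 0 N, Λ d * vonMangoldtWeight d (N / d) := by
        rw [sum_vonMangoldt_mul_vonMangoldtWeight]
        exact sub_le_sub (mul_log_two_sub_log_le N) (sum_chiThree_mul_log_le N)
    _ ≤ ∑ p ∈ N.primesLE, log p * vonMangoldtWeight p (N / p) + 2 * (ψ N - θ N) :=
        sum_vonMangoldt_mul_le (fun d _ ↦ vonMangoldtWeight_le_two d (N / d)) N
    _ ≤ _ := by
        gcongr
        exact sum_primesLE_log_mul_vonMangoldtWeight_le hN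

theorem sqrt_mul_log_add_log_lt {x : ℝ} (hx : 2 ^ 22 ≤ x) :
    4 * √x * log x + 5 * log x < log 2 / 21 * x := by
  have hsqrt22 : √(2 ^ 22 : ℝ) = 2048 := by
    rw [show (2 : ℝ) ^ 22 = 2048 ^ 2 by norm_num, sqrt_sq (by norm_num)]
  have hsqrt : 2048 ≤ √x := hsqrt22 ▸ sqrt_le_sqrt hx
  have hexp : exp 2 ≤ 2 ^ 22 := by
    have := exp_one_lt_d9
    rw [show (2 : ℝ) = 1 + 1 by norm_num, exp_add]
    norm_num
    nlinarith [exp_pos 1]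
  have hlog : log x ≤ 11 / 1024 * log 2 * √x := by
    have h := log_div_sqrt_antitoneOn (Set.mem_Ici.2 hexp) (Set.mem_Ici.2 (hexp.trans hx)) hx
    simp only [hsqrt22, log_pow] at h
    rw [div_le_iff₀ (by linarith)] at h
    push_cast at h
    linarith
  have hsq : √x * √x = x := mul_self_sqrt (by linarith)
  have : 0 < log 2 := log_pos one_lt_two
  calc 4 * √x * log x + 5 * log x = (4 * √x + 5) * log x := by ring
    _ ≤ (4 * √x + 5) * (11 / 1024 * log 2 * √x) := by gcongr
    _ = log 2 * (√x * (11 / 256 * √x + 55 / 1024)) := by ring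
    _ < log 2 * (√x * (√x / 21)) := by
        gcongr
        linarith
    _ = log 2 / 21 * (√x * √x) := by ring
    _ = log 2 / 21 * x := by rw [hsq]

theorem two_le_card_filter_upperHalfPrimes_mod_three_eq_two {N : ℕ} (hN : 2 ^ 22 ≤ N) :
    2 ≤ #{p ∈ upperHalfPrimes N | p % 3 = 2} := by
  by_contra! hcard
  have hN' : (2 ^ 22 : ℝ) ≤ N := by exact_mod_cast hN
  have hfew : ∑ p ∈ upperHalfPrimes N with p % 3 = 2, log p ≤ log N :=
    calc ∑ p ∈ upperHalfPrimes N with p % 3 = 2, log p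
        ≤ #{p ∈ upperHalfPrimes N | p % 3 = 2} • log N :=
          sum_le_card_nsmul _ _ _ fun p hp ↦
            monotone_log_natCast (mem_upperHalfPrimes.1 (mem_filter.1 hp).1).2.1
      _ ≤ 1 • log N := nsmul_le_nsmul_left (log_natCast_nonneg N) (by omega)
      _ = log N := one_nsmul _
  have hsucc : log (N + 1) ≤ 2 * log N := by
    rw [← Nat.cast_two, ← log_pow]
    exact log_le_log (by positivity) (by nlinarith)
  have htheta {x : ℝ} (hx : 0 ≤ x) : θ x ≤ 2 * log 2 * x := by
    have hlog4 : log 4 = 2 * log 2 := by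
      rw [show (4 : ℝ) = 2 ^ 2 by norm_num, log_pow, Nat.cast_two]
    exact hlog4 ▸ Chebyshev.theta_le_log4_mul_x hx
  have htheta3 : θ (N / 3) ≤ 2 * log 2 * (N / 3) := htheta (by positivity)
  have htheta7 : θ (N / 7) ≤ 2 * log 2 * (N / 7) := htheta (by positivity)
  have hpsi := Chebyshev.psi_sub_theta_le (x := N) (by linarith)
  have hmain := mul_log_two_sub_le_theta_add_sum_log (N := N) (by omega)
  have := sqrt_mul_log_add_log_lt hN'
  linarith

theorem two_le_card_upperHalfPrimes_and_exists_mod_three_eq_two_of_lt {n : ℕ}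
    (hn : 11 ≤ n) (hn' : n < 2 ^ 22) :
    2 ≤ #(upperHalfPrimes n) ∧ ∃ q ∈ upperHalfPrimes n, q % 3 = 2 := by
  let pairs : List (ℕ × ℕ) := [(11, 13), (17, 19), (29, 31), (47, 53), (83, 89),
    (149, 163), (293, 283), (557, 563), (1103, 1109), (2153, 2203), (4289, 4297), (8573, 8563),
    (17117, 17123), (34217, 34231), (68399, 68389), (136769, 136777), (273521, 273527),
    (547037, 547021), (1093997, 1094029), (2187971, 2187979)]
  have hpairs : ∀ x ∈ (11, 7) :: pairs, x.1.Prime ∧ x.2.Prime ∧ x.1 ≠ x.2 ∧ x.1 % 3 = 2 := by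
    simp only [pairs, List.forall_mem_cons]
    norm_num
  obtain ⟨⟨q, r⟩, hmem, hle, hlt⟩ := exists_mem_le_lt_of_isChain (x := n) (i := (11, 7))
    (l := pairs) (lo := fun x ↦ max x.1 x.2) (hi := fun x ↦ 2 * min x.1 x.2) (by simp [pairs]) hn
    (by simpa [pairs] using by omega)
  obtain ⟨hq, hr, hne, hq3⟩ := hpairs _ hmem
  have hqmem : q ∈ upperHalfPrimes n := mem_upperHalfPrimes.2 ⟨hq, by grind, by grind⟩
  have hrmem : r ∈ upperHalfPrimes n := mem_upperHalfPrimes.2 ⟨hr, by grind, by grind⟩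
  exact ⟨one_lt_card.2 ⟨q, hqmem, r, hrmem, hne⟩, q, hqmem, hq3⟩

theorem two_le_card_upperHalfPrimes_and_exists_mod_three_eq_two {n : ℕ} (hn : 11 ≤ n) :
    2 ≤ #(upperHalfPrimes n) ∧ ∃ q ∈ upperHalfPrimes n, q % 3 = 2 := by
  rcases lt_or_ge n (2 ^ 22) with hsmall | hlarge
  · exact two_le_card_upperHalfPrimes_and_exists_mod_three_eq_two_of_lt hn hsmall
  · have hcard := two_le_card_filter_upperHalfPrimes_mod_three_eq_two hlarge
    obtain ⟨q, hq⟩ := card_pos.1 (two_pos.trans_le hcard)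
    rw [mem_filter] at hq
    exact ⟨hcard.trans (card_filter_le _ _), q, hq⟩

end PrimesInUpperHalf

/-- Let `n ≥ 11` and let `p : Fin k → ℕ` be the strictly increasing enumeration of the
prime factors of `n!`, so that `n! = p 0 ^ α 0 * ⋯ * p (k-1) ^ α (k-1)` with all
multiplicities `α i = (n !).factorization (p i) ≥ 1` and `p 0 = 2`. Then the two largest
prime factors occur with multiplicity exactly `1`, the largest prime factor is at most
`2 ^ α 0` (where `α 0` is the multiplicity of `2`), and there is a prime `q ≡ 2 (mod 3)`
exactly dividing `n!` to the first power. -/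
theorem factorial_factorization_structure (n : ℕ) (hn : 11 ≤ n)
    (k : ℕ) (p : Fin k → ℕ) (hmono : StrictMono p)
    (hrange : ∀ q : ℕ, q ∈ (n.factorial).primeFactors ↔ ∃ i : Fin k, p i = q) :
    ∃ hk : 2 ≤ k,
      (n.factorial).factorization (p ⟨k - 1, by omega⟩) = 1 ∧
      (n.factorial).factorization (p ⟨k - 2, by omega⟩) = 1 ∧
      p ⟨k - 1, by omega⟩ ≤ 2 ^ (n.factorial).factorization 2 ∧
      ∃ q : ℕ, q.Prime ∧ q % 3 = 2 ∧
        q ∣ n.factorial ∧ ¬ q ^ 2 ∣ n.factorial := by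
  obtain ⟨hcard, q, hq, hq3⟩ := two_le_card_upperHalfPrimes_and_exists_mod_three_eq_two hn
  obtain ⟨hqprime, hqn, -⟩ := mem_upperHalfPrimes.1 hq
  have hp (i : Fin k) : (p i).Prime ∧ p i ≤ n :=
    mem_primeFactors_factorial.1 ((hrange (p i)).2 ⟨i, rfl⟩)
  have himage : upperHalfPrimes n ⊆ Finset.image p {i | n / 2 < p i} := fun r hr ↦ by
    obtain ⟨hrprime, hrn, hnr⟩ := mem_upperHalfPrimes.1 hr
    obtain ⟨i, rfl⟩ := (hrange r).1 (mem_primeFactors_factorial.2 ⟨hrprime, hrn⟩)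
    exact Finset.mem_image_of_mem p (Finset.mem_filter_univ i |>.2 (by omega))
  have hlarge : 2 ≤ Finset.card {i | n / 2 < p i} :=
    hcard.trans ((Finset.card_le_card himage).trans Finset.card_image_le)
  have hk : 2 ≤ k := hlarge.trans (card_finset_fin_le _)
  have hmult (i : Fin k) (hi : k ≤ i + 2) : n.factorial.factorization (p i) = 1 := by
    have hhalf := lt_apply_of_monotone_of_le_add_card hmono.monotone (hi.trans (by gcongr))
    exact factorization_factorial_eq_one
      (mem_upperHalfPrimes.2 ⟨(hp i).1, (hp i).2, by omega⟩)
  refine ⟨hk, hmult _ (by grind), hmult _ (by grind),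
    (hp _).2.trans (le_two_pow_factorization_factorial (by omega)),
    q, hqprime, hq3, (hqprime.dvd_factorial).2 hqn, ?_⟩
  rw [hqprime.pow_dvd_iff_le_factorization n.factorial_ne_zero, factorization_factorial_eq_one hq]
  norm_num
end

section
/- For every Zumkeller number a, there exists a Zumkeller number b with a < b ≤ a + 12; that is, the difference of two consecutive Zumkeller numbers is at most 12. -/
/-- A positive integer `n` is `k`-layered if the set of all positive divisors of `n`
can be partitioned into `k` pairwise disjoint subsets (here given by the fibers of a
coloring `c`) each of which has the same sum. -/
def IsKLayered (n k : ℕ) : Prop :=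
  ∃ c : ℕ → Fin k,
    ∀ i j : Fin k,
      ∑ d ∈ n.divisors.filter (fun d => c d = i), d =
      ∑ d ∈ n.divisors.filter (fun d => c d = j), d

/-!
Of the two smallest multiples `6 * q > a`, at least one has `¬ 3 ∣ q`, and it is Zumkeller: removing
from it the full power of `2` and the single factor `3` leaves a cofactor coprime to the Zumkeller
number `2 ^ k * 3`, `1 ≤ k`, and multiplying by a coprime cofactor preserves Zumkeller numbers.
That `2 ^ k * p` is Zumkeller for an odd prime `p < 2 ^ (k + 1)` is a matter of binary expansions:
every number below `2 ^ (k + 1)` is a sum of distinct divisors of `2 ^ k`.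
-/

theorem sum_divisors_mul_of_coprime {M : Type*} [AddCommMonoid M] {m n : ℕ} (h : m.Coprime n)
    (f : ℕ → M) :
    ∑ d ∈ (m * n).divisors, f d = ∑ x ∈ m.divisors, ∑ y ∈ n.divisors, f (x * y) := by
  rw [Nat.divisors_mul, Finset.mul_def, Finset.sum_image h.mul_injOn_divisors, Finset.sum_product]

-- A divisor `d` of `n * m` inherits the color of its part `gcd d n`, which scales each color sum
-- by the sum of the divisors of `m`.
theorem IsKLayered.mul_of_coprime {n m k : ℕ} (hn : IsKLayered n k) (hnm : n.Coprime m) :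
    IsKLayered (n * m) k := by
  obtain ⟨c, hc⟩ := hn
  have gcd_mul {x y : ℕ} (hx : x ∈ n.divisors) (hy : y ∈ m.divisors) : (x * y).gcd n = x := by
    have hyn : y.Coprime n := (hnm.coprime_dvd_right (Nat.dvd_of_mem_divisors hy)).symm
    rw [hyn.gcd_mul_right_cancel, Nat.gcd_eq_left (Nat.dvd_of_mem_divisors hx)]
  have color_sum (i : Fin k) :
      ∑ d ∈ (n * m).divisors with c (d.gcd n) = i, d =
        (∑ x ∈ n.divisors with c x = i, x) * ∑ y ∈ m.divisors, y := by
    rw [Finset.sum_filter, sum_divisors_mul_of_coprime hnm, Finset.sum_filter, Finset.sum_mul]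
    refine Finset.sum_congr rfl fun x hx ↦ ?_
    rw [Finset.mul_sum]
    refine Finset.sum_congr rfl fun y hy ↦ ?_
    rw [gcd_mul hx hy, ite_mul, zero_mul]
  exact ⟨fun d ↦ c (d.gcd n), fun i j ↦ by rw [color_sum, color_sum, hc i j]⟩

theorem isKLayered_two_of_two_mul_sum_eq {n : ℕ} {S : Finset ℕ} (hS : S ⊆ n.divisors)
    (hsum : 2 * ∑ d ∈ S, d = ∑ d ∈ n.divisors, d) : IsKLayered n 2 := by
  have sum_compl : ∑ d ∈ n.divisors \ S, d = ∑ d ∈ S, d := by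
    have := Finset.sum_sdiff (f := fun d ↦ d) hS
    lia
  have color_zero : {d ∈ n.divisors | (if d ∈ S then 0 else 1 : Fin 2) = 0} = S := by
    grind
  have color_one : {d ∈ n.divisors | (if d ∈ S then 0 else 1 : Fin 2) = 1} = n.divisors \ S := by
    grind
  have color_sum : ∀ i : Fin 2,
      ∑ d ∈ n.divisors with (if d ∈ S then 0 else 1) = i, d = ∑ d ∈ S, d :=
    Fin.forall_fin_two.2 ⟨by rw [color_zero], by rw [color_one, sum_compl]⟩
  exact ⟨fun d ↦ if d ∈ S then 0 else 1, fun i j ↦ by rw [color_sum, color_sum]⟩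

theorem isKLayered_mul_prime_of_two_mul_sum_eq {n p : ℕ} (hp : p.Prime) (hpn : ¬p ∣ n)
    {D E : Finset ℕ} (hD : D ⊆ n.divisors) (hE : E ⊆ n.divisors)
    (hsum : 2 * (∑ d ∈ D, d + (∑ d ∈ E, d) * p) = (∑ d ∈ n.divisors, d) * (p + 1)) :
    IsKLayered (n * p) 2 := by
  have hn : n ≠ 0 := by
    rintro rfl
    exact hpn (dvd_zero p)
  have disjoint_image : Disjoint D (E.image (· * p)) := by
    refine Finset.disjoint_left.2 fun d hdD hdE ↦ hpn ?_
    obtain ⟨e, -, rfl⟩ := Finset.mem_image.1 hdE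
    exact (dvd_mul_left p e).trans (Nat.dvd_of_mem_divisors (hD hdD))
  have union_subset : D ∪ E.image (· * p) ⊆ (n * p).divisors := by
    refine Finset.union_subset
      (hD.trans (Nat.divisors_subset_of_dvd (mul_ne_zero hn hp.ne_zero) (dvd_mul_right n p))) ?_
    refine Finset.image_subset_iff.2 fun e he ↦ Nat.mem_divisors.2 ⟨?_, mul_ne_zero hn hp.ne_zero⟩
    exact mul_dvd_mul_right (Nat.dvd_of_mem_divisors (hE he)) p
  refine isKLayered_two_of_two_mul_sum_eq union_subset ?_
  rw [Finset.sum_union disjoint_image, Finset.sum_image (mul_left_injective₀ hp.ne_zero).injOn,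
    ← Finset.sum_mul, hsum, Nat.Coprime.sum_divisors_mul (hp.coprime_iff_not_dvd.2 hpn).symm,
    hp.sum_divisors, add_comm]

theorem exists_subset_divisors_two_pow_sum_eq {k r : ℕ} (hr : r < 2 ^ (k + 1)) :
    ∃ S ⊆ (2 ^ k).divisors, ∑ d ∈ S, d = r := by
  refine ⟨r.bitIndices.toFinset.image (2 ^ ·), Finset.image_subset_iff.2 fun i hi ↦ ?_, ?_⟩
  · have hir : 2 ^ i ≤ r := Nat.two_pow_le_of_mem_bitIndices (List.mem_toFinset.1 hi)
    have hik : i < k + 1 := (Nat.pow_lt_pow_iff_right one_lt_two).1 (hir.trans_lt hr)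
    exact (Nat.mem_divisors_prime_pow Nat.prime_two k).2 ⟨i, Nat.lt_succ_iff.1 hik, rfl⟩
  · rw [Finset.sum_image (Nat.pow_right_injective le_rfl).injOn,
      Finset.sum_toFinset_bitIndices_two_pow]

-- Half of the divisor sum `(2 ^ (k + 1) - 1) * (p + 1)` splits as
-- `(2 ^ k + (p - 1) / 2) + (2 ^ k - 1) * p`, and both `2 ^ k + (p - 1) / 2` and `2 ^ k - 1` are
-- below `2 ^ (k + 1)`.
theorem isKLayered_two_pow_mul_prime {k p : ℕ} (hp : p.Prime) (hp2 : p ≠ 2)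
    (hpk : p < 2 ^ (k + 1)) : IsKLayered (2 ^ k * p) 2 := by
  obtain ⟨t, rfl⟩ := hp.odd_of_ne_two hp2
  have not_dvd : ¬2 * t + 1 ∣ 2 ^ k := fun h ↦
    hp2 ((Nat.prime_dvd_prime_iff_eq hp Nat.prime_two).1 (hp.dvd_of_dvd_pow h))
  obtain ⟨D, hD, sum_D⟩ := exists_subset_divisors_two_pow_sum_eq (k := k) (r := 2 ^ k + t) (by lia)
  obtain ⟨E, hE, sum_E⟩ := exists_subset_divisors_two_pow_sum_eq (k := k) (r := 2 ^ k - 1) (by lia)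
  refine isKLayered_mul_prime_of_two_mul_sum_eq hp not_dvd hD hE ?_
  rw [sum_D, sum_E, Nat.sum_divisors_prime_pow Nat.prime_two, Nat.geomSum_eq le_rfl]
  obtain ⟨s, hs⟩ : ∃ s, 2 ^ k = s + 1 := Nat.exists_eq_add_one.2 (by positivity)
  have hs' : 2 ^ (k + 1) = 2 * s + 1 + 1 := by lia
  rw [hs, hs']
  simp only [Nat.add_sub_cancel, Nat.reduceSub, Nat.div_one]
  ring

theorem isKLayered_six_mul {q : ℕ} (hq : ¬3 ∣ q) : IsKLayered (6 * q) 2 := by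
  have hq0 : q ≠ 0 := by
    rintro rfl
    exact hq (dvd_zero 3)
  obtain ⟨k, m, h2m, rfl⟩ := Nat.exists_eq_pow_mul_and_not_dvd hq0 2 (by norm_num)
  have h3m : ¬3 ∣ m := fun h ↦ hq (h.mul_left _)
  have coprime_m : (2 ^ (k + 1) * 3).Coprime m :=
    ((Nat.prime_two.coprime_iff_not_dvd.2 h2m).pow_left _).mul_left
      (Nat.prime_three.coprime_iff_not_dvd.2 h3m)
  have layered : IsKLayered (2 ^ (k + 1) * 3) 2 :=
    isKLayered_two_pow_mul_prime Nat.prime_three (by norm_num)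
      (by have := Nat.one_le_two_pow (n := k); lia)
  rw [show 6 * (2 ^ k * m) = 2 ^ (k + 1) * 3 * m by ring]
  exact layered.mul_of_coprime coprime_m

theorem zumkeller_gap_le_twelve_general (a : ℕ) :
    ∃ b : ℕ, a < b ∧ b ≤ a + 12 ∧ IsKLayered b 2 := by
  obtain ⟨q, hlt, hle, hq⟩ : ∃ q, a < 6 * q ∧ 6 * q ≤ a + 12 ∧ ¬3 ∣ q := by
    by_cases h : 3 ∣ a / 6 + 1
    · exact ⟨a / 6 + 2, by lia, by lia, by lia⟩
    · exact ⟨a / 6 + 1, by lia, by lia, h⟩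
  exact ⟨6 * q, hlt, hle, isKLayered_six_mul hq⟩

/-- For every Zumkeller number `a` there is a Zumkeller number `b` with
`a < b ≤ a + 12`: the difference of two consecutive Zumkeller numbers is at most 12. -/
theorem zumkeller_gap_le_twelve (a : ℕ) (ha : 0 < a) (h : IsKLayered a 2) :
    ∃ b : ℕ, a < b ∧ b ≤ a + 12 ∧ IsKLayered b 2 :=
  zumkeller_gap_le_twelve_general a
end
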